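/- Let n ≥ 1 and let q ∈ (−∞, 1/n]∖{0}. If μ is a Borel measure on ℝⁿ which is both q-concave and q-homogeneous, then μ is q-complemented concave. -/

import Mathlib

open MeasureTheory Set Filter
open scoped Pointwise ENNReal

/-- The inner measure induced by a measure `μ`. -/
noncomputable def innerMeasure {α : Type*} [MeasurableSpace α] (μ : Measure α) (S : Set α) :
    ℝ≥0∞ :=
  ⨆ (F : Set α) (_ : MeasurableSet F) (_ : F ⊆ S), μ F

/-!
In polar coordinates a measure which is homogeneous of degree `α` is `r ^ (α - 1) dr` on each ray.
If `α < 0` or `1 ≤ α`, the superlevel sets of this density are intervals of infinite radial measure,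
so a set whose complement has finite radial measure meets each of them. Brunn–Minkowski on the line
can therefore be used inside each superlevel set, where passing to complements reverses the
inequality; integrating over the levels gives complemented concavity with exponent `1` on each ray.

To average over the rays when `μ` is not assumed σ-finite, the unit sphere of polar coordinates is
replaced by a weight which is supported on the set `Aᶜ ∪ Bᶜ` of finite measure and has integral `1`
along each ray that meets this set in positive measure; these include all rays which meet the
complement of `λA + (1 - λ)B`. This gives exponent `1` for `μ`. Applied to `A` and `B` rescaled so
that their complements have measure about `1`, it gives exponent `q = 1 / α`.
-/

section PowerMean

variable {q lam : ℝ}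

/-- The weighted `q`-mean `(λ x ^ q + (1 - λ) y ^ q) ^ (1 / q)` of two extended nonnegative
reals, through which complemented concavity is stated. -/
noncomputable def powerMean (q lam : ℝ) (x y : ℝ≥0∞) : ℝ≥0∞ :=
  (ENNReal.ofReal lam * x ^ q + ENNReal.ofReal (1 - lam) * y ^ q) ^ (1 / q)

theorem powerMean_ofReal (hlam : lam ∈ Ioo (0 : ℝ) 1) {a b : ℝ} (ha : 0 < a) (hb : 0 < b) :
    powerMean q lam (ENNReal.ofReal a) (ENNReal.ofReal b) =
      ENNReal.ofReal ((lam * a ^ q + (1 - lam) * b ^ q) ^ (1 / q)) := by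
  have hl := hlam.1
  have hl' := sub_pos.2 hlam.2
  rw [powerMean, ENNReal.ofReal_rpow_of_pos ha, ENNReal.ofReal_rpow_of_pos hb,
    ← ENNReal.ofReal_mul hl.le, ← ENNReal.ofReal_mul hl'.le,
    ← ENNReal.ofReal_add (by positivity) (by positivity),
    ENNReal.ofReal_rpow_of_pos (by positivity)]

theorem continuous_powerMean (q lam : ℝ) :
    Continuous fun p : ℝ≥0∞ × ℝ≥0∞ => powerMean q lam p.1 p.2 := by
  have hterm : ∀ c : ℝ, Continuous fun x : ℝ≥0∞ => ENNReal.ofReal c * x ^ q := fun c =>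
    (ENNReal.continuous_const_mul ENNReal.ofReal_ne_top).comp ENNReal.continuous_rpow_const
  exact ENNReal.continuous_rpow_const.comp
    (((hterm lam).comp continuous_fst).add ((hterm (1 - lam)).comp continuous_snd))

theorem le_powerMean_of_forall_lt_ofReal {x y z : ℝ≥0∞} (hx : x ≠ ⊤) (hy : y ≠ ⊤)
    (h : ∀ a b : ℝ, x < ENNReal.ofReal a → y < ENNReal.ofReal b →
      z ≤ powerMean q lam (ENNReal.ofReal a) (ENNReal.ofReal b)) :
    z ≤ powerMean q lam x y := by
  have hlim : ∀ {w : ℝ≥0∞}, w ≠ ⊤ →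
      Tendsto (fun ε : ℝ => ENNReal.ofReal (w.toReal + ε)) (nhdsWithin 0 (Ioi 0)) (nhds w) := by
    intro w hw
    have hcont : Continuous fun ε : ℝ => ENNReal.ofReal (w.toReal + ε) :=
      ENNReal.continuous_ofReal.comp (continuous_const_add _)
    simpa [ENNReal.ofReal_toReal hw] using (hcont.tendsto 0).mono_left nhdsWithin_le_nhds
  refine ge_of_tendsto (((continuous_powerMean q lam).tendsto (x, y)).comp
    ((hlim hx).prodMk_nhds (hlim hy))) ?_
  filter_upwards [self_mem_nhdsWithin] with ε (hε : 0 < ε)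
  exact h _ _ ((ENNReal.lt_ofReal_iff_toReal_lt hx).2 (by linarith))
    ((ENNReal.lt_ofReal_iff_toReal_lt hy).2 (by linarith))

theorem ofReal_add_ofReal_one_sub (hlam : lam ∈ Ioo (0 : ℝ) 1) :
    ENNReal.ofReal lam + ENNReal.ofReal (1 - lam) = 1 := by
  rw [← ENNReal.ofReal_add hlam.1.le (sub_nonneg.2 hlam.2.le), add_sub_cancel, ENNReal.ofReal_one]

end PowerMean

section RealLine

variable {lam : ℝ} {A B F J : Set ℝ}

theorem volume_add_volume_le_of_isCompact (hA : IsCompact A) (hB : IsCompact B)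
    (hA0 : A.Nonempty) (hB0 : B.Nonempty) : volume A + volume B ≤ volume (A + B) := by
  obtain ⟨a, haA, ha⟩ := hA.exists_isGreatest hA0
  obtain ⟨b, hbB, hb⟩ := hB.exists_isLeast hB0
  have hinter : (b +ᵥ A) ∩ (a +ᵥ B) ⊆ {a + b} := by
    rintro _ ⟨⟨x, hx, rfl⟩, y, hy, hxy⟩
    have hxa : x ≤ a := ha hx
    have hby : b ≤ y := hb hy
    simp only [vadd_eq_add] at hxy
    simp only [vadd_eq_add, mem_singleton_iff]
    linarith
  calc volume A + volume B = volume (b +ᵥ A) + volume (a +ᵥ B) := by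
        rw [measure_vadd, measure_vadd]
    _ = volume ((b +ᵥ A) ∪ (a +ᵥ B)) :=
        (measure_union₀ (hB.vadd a).measurableSet.nullMeasurableSet
          (measure_mono_null hinter Real.volume_singleton)).symm
    _ ≤ volume (A + B) := by
        refine measure_mono (union_subset ?_ (vadd_set_subset_add haA))
        rw [add_comm A B]
        exact vadd_set_subset_add hbB

theorem volume_add_volume_le (hA : MeasurableSet A) (hB : MeasurableSet B)
    (hA0 : A.Nonempty) (hB0 : B.Nonempty) : volume A + volume B ≤ volume (A + B) := by
  obtain ⟨a, ha⟩ := hA0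
  obtain ⟨b, hb⟩ := hB0
  rw [hA.measure_eq_iSup_isCompact, hB.measure_eq_iSup_isCompact]
  simp only [iSup_and']
  refine ENNReal.biSup_add_biSup_le' ⟨∅, empty_subset A, isCompact_empty⟩
    ⟨∅, empty_subset B, isCompact_empty⟩ fun K hK L hL => ?_
  calc volume K + volume L ≤ volume (insert a K) + volume (insert b L) := by
        gcongr <;> exact subset_insert _ _
    _ ≤ volume (insert a K + insert b L) :=
        volume_add_volume_le_of_isCompact (hK.2.insert a) (hL.2.insert b)
          (insert_nonempty a K) (insert_nonempty b L)
    _ ≤ volume (A + B) := by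
        gcongr
        · exact insert_subset ha hK.1
        · exact insert_subset hb hL.1

theorem combo_volume_le_volume_combo (hlam : lam ∈ Ioo (0 : ℝ) 1)
    (hA : MeasurableSet A) (hB : MeasurableSet B) (hA0 : A.Nonempty) (hB0 : B.Nonempty) :
    ENNReal.ofReal lam * volume A + ENNReal.ofReal (1 - lam) * volume B ≤
      volume (lam • A + (1 - lam) • B) := by
  have h := volume_add_volume_le (hA.const_smul₀ lam) (hB.const_smul₀ (1 - lam))
    hA0.smul_set hB0.smul_set
  simpa only [Measure.addHaar_smul, Module.finrank_self, pow_one, abs_of_pos hlam.1,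
    abs_of_pos (sub_pos.2 hlam.2)] using h

theorem volume_inter_le_of_volume_ne_top (hlam : lam ∈ Ioo (0 : ℝ) 1)
    (hA : MeasurableSet A) (hB : MeasurableSet B) (hF : MeasurableSet F)
    (hJ : J.OrdConnected) (hJtop : volume J ≠ ⊤)
    (hAJ : (A ∩ J).Nonempty) (hBJ : (B ∩ J).Nonempty) (hAB : lam • A + (1 - lam) • B ⊆ Fᶜ) :
    volume (F ∩ J) ≤
      ENNReal.ofReal lam * volume (Aᶜ ∩ J) + ENNReal.ofReal (1 - lam) * volume (Bᶜ ∩ J) := by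
  have hsplit : ∀ {X : Set ℝ}, MeasurableSet X →
      volume (X ∩ J) + volume (Xᶜ ∩ J) = volume J := fun {X} hX => by
    rw [inter_comm X, inter_comm Xᶜ, ← sdiff_eq, measure_inter_add_sdiff J hX]
  have hcombo : lam • (A ∩ J) + (1 - lam) • (B ∩ J) ⊆ Fᶜ ∩ J :=
    subset_inter ((add_subset_add (smul_set_mono inter_subset_left)
      (smul_set_mono inter_subset_left)).trans hAB)
      ((add_subset_add (smul_set_mono inter_subset_right)
        (smul_set_mono inter_subset_right)).trans
          (hJ.convex.set_combo_subset hlam.1.le (sub_nonneg.2 hlam.2.le) (by ring)))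
  have hfin : ENNReal.ofReal lam * volume (A ∩ J) + ENNReal.ofReal (1 - lam) * volume (B ∩ J)
      ≠ ⊤ := by
    have hAtop := measure_ne_top_of_subset (inter_subset_right : A ∩ J ⊆ J) hJtop
    have hBtop := measure_ne_top_of_subset (inter_subset_right : B ∩ J ⊆ J) hJtop
    finiteness
  refine (ENNReal.add_le_add_iff_right hfin).1 ?_
  calc volume (F ∩ J) +
        (ENNReal.ofReal lam * volume (A ∩ J) + ENNReal.ofReal (1 - lam) * volume (B ∩ J))
      ≤ volume (F ∩ J) + volume (Fᶜ ∩ J) := by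
        gcongr
        exact (combo_volume_le_volume_combo hlam (hA.inter hJ.measurableSet)
          (hB.inter hJ.measurableSet) hAJ hBJ).trans (measure_mono hcombo)
    _ = ENNReal.ofReal lam * volume J + ENNReal.ofReal (1 - lam) * volume J := by
        rw [hsplit hF, ← add_mul, ofReal_add_ofReal_one_sub hlam, one_mul]
    _ = ENNReal.ofReal lam * (volume (A ∩ J) + volume (Aᶜ ∩ J)) +
        ENNReal.ofReal (1 - lam) * (volume (B ∩ J) + volume (Bᶜ ∩ J)) := by
        rw [hsplit hA, hsplit hB]
    _ = _ := by ring

theorem volume_inter_le (hlam : lam ∈ Ioo (0 : ℝ) 1)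
    (hA : MeasurableSet A) (hB : MeasurableSet B) (hF : MeasurableSet F) (hJ : J.OrdConnected)
    (hAJ : (A ∩ J).Nonempty) (hBJ : (B ∩ J).Nonempty) (hAB : lam • A + (1 - lam) • B ⊆ Fᶜ) :
    volume (F ∩ J) ≤
      ENNReal.ofReal lam * volume (Aᶜ ∩ J) + ENNReal.ofReal (1 - lam) * volume (Bᶜ ∩ J) := by
  obtain ⟨a, haA, haJ⟩ := hAJ
  obtain ⟨b, hbB, hbJ⟩ := hBJ
  have hmono : Monotone fun R : ℝ => F ∩ (J ∩ Icc (-R) R) := fun R S hRS =>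
    inter_subset_inter_right _ (inter_subset_inter_right _ (Icc_subset_Icc (neg_le_neg hRS) hRS))
  have hexhaust : ⋃ R : ℝ, F ∩ (J ∩ Icc (-R) R) = F ∩ J := by
    rw [← inter_iUnion, ← inter_iUnion, iUnion_eq_univ_iff.2, inter_univ]
    exact fun x => ⟨|x|, neg_abs_le x, le_abs_self x⟩
  have hlim := tendsto_measure_iUnion_atTop (μ := volume) hmono
  rw [hexhaust] at hlim
  refine le_of_tendsto hlim ?_
  filter_upwards [eventually_ge_atTop |a|, eventually_ge_atTop |b|] with R haR hbR
  refine (volume_inter_le_of_volume_ne_top hlam hA hB hF (hJ.inter ordConnected_Icc)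
    (measure_ne_top_of_subset inter_subset_right (by simp))
    ⟨a, haA, haJ, abs_le.1 haR⟩ ⟨b, hbB, hbJ, abs_le.1 hbR⟩ hAB).trans ?_
  gcongr <;> exact inter_subset_left

theorem volume_compl_union_compl_inter_Ioi_ne_zero (hlam : lam ∈ Ioo (0 : ℝ) 1)
    (hAB : (1 : ℝ) ∉ lam • A + (1 - lam) • B) : volume ((Aᶜ ∪ Bᶜ) ∩ Ioi 0) ≠ 0 := by
  intro hnull
  have hl := hlam.1
  have hl' := sub_pos.2 hlam.2
  set N := (Aᶜ ∪ Bᶜ) ∩ Ioi (0 : ℝ)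
  have hmem : ∀ r, 0 < r → r ∉ N → r ∈ A ∧ r ∈ B := fun r hr hrN => by
    by_contra hcon
    exact hrN ⟨not_and_or.1 hcon, hr⟩
  have hline : ∀ c : ℝ, c ≠ 0 → ∀ᵐ t : ℝ, 1 + c * t ∉ N := fun c hc => by
    change volume ((c * ·) ⁻¹' ((1 + ·) ⁻¹' Nᶜᶜ)) = 0
    rw [compl_compl, Real.volume_preimage_mul_left hc, measure_preimage_add, hnull, mul_zero]
  -- The points `1 + (1 - lam) * t` of `A` and `1 - lam * t` of `B` combine to `1`, for every `t`.
  obtain ⟨t, ⟨htA, htB⟩, ht, ht'⟩ :=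
    (Measure.dense_of_ae ((hline (1 - lam) hl'.ne').and (hline (-lam) (neg_ne_zero.2 hl.ne')))
      ).exists_mem_open isOpen_Ioo (nonempty_Ioo.2 (show (-1 : ℝ) < 1 by norm_num))
  refine hAB ⟨_, smul_mem_smul_set (hmem _ (by nlinarith) htA).1, _,
    smul_mem_smul_set (hmem _ (by nlinarith) htB).2, ?_⟩
  simp only [smul_eq_mul]
  ring

end RealLine

section RayMeasure

variable {α : ℝ}

/-- The measure `r ^ (α - 1) dr` on the half-line `r > 0`: the radial part, in polar coordinates,
of a measure which is homogeneous of degree `α`. For `α = 0` it is the Haar measure `dr / r` of the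
multiplicative group of positive reals. -/
noncomputable def rayMeasure (α : ℝ) : Measure ℝ :=
  (volume.restrict (Ioi 0)).withDensity fun r => ENNReal.ofReal (r ^ (α - 1))

instance : SFinite (rayMeasure α) :=
  inferInstanceAs (SFinite (Measure.withDensity _ _))

theorem rayMeasure_apply {S : Set ℝ} (hS : MeasurableSet S) :
    rayMeasure α S = ∫⁻ r in S ∩ Ioi 0, ENNReal.ofReal (r ^ (α - 1)) := by
  rw [rayMeasure, withDensity_apply _ hS, Measure.restrict_restrict hS]

theorem rayMeasure_eq_zero_iff {S : Set ℝ} (hS : MeasurableSet S) :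
    rayMeasure α S = 0 ↔ volume (S ∩ Ioi 0) = 0 := by
  rw [rayMeasure_apply hS, setLIntegral_eq_zero_iff (hS.inter measurableSet_Ioi) (by fun_prop),
    measure_eq_zero_iff_ae_notMem]
  refine eventually_congr (Eventually.of_forall fun r => imp_congr_right fun hr => ?_)
  simpa only [ENNReal.ofReal_eq_zero, not_le, imp_false] using
    iff_false_intro (Real.rpow_pos_of_pos hr.2 (α - 1)).not_ge

theorem ae_rayMeasure_pos : ∀ᵐ r ∂rayMeasure α, 0 < r :=
  (withDensity_absolutelyContinuous _ _).ae_le (ae_restrict_mem measurableSet_Ioi)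

theorem lintegral_rayMeasure {f : ℝ → ℝ≥0∞} (hf : Measurable f) :
    ∫⁻ r, f r ∂rayMeasure α =
      ∫⁻ u, ENNReal.ofReal (Real.exp (α * u)) * f (Real.exp u) := by
  rw [rayMeasure, lintegral_withDensity_eq_lintegral_mul _ (by fun_prop) hf,
    ← Real.range_exp, ← image_univ, lintegral_image_eq_lintegral_abs_deriv_mul MeasurableSet.univ
    (fun x _ => (Real.hasDerivAt_exp x).hasDerivWithinAt) Real.exp_injective.injOn,
    Measure.restrict_univ]
  refine lintegral_congr fun u => ?_
  rw [Pi.mul_apply, ← mul_assoc, abs_of_pos (Real.exp_pos u),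
    ← ENNReal.ofReal_mul (Real.exp_pos u).le, ← Real.exp_mul, ← Real.exp_add]
  ring_nf

theorem lintegral_mul_right_rayMeasure_zero {f : ℝ → ℝ≥0∞} (hf : Measurable f) {c : ℝ}
    (hc : 0 < c) : ∫⁻ r, f (r * c) ∂rayMeasure 0 = ∫⁻ r, f r ∂rayMeasure 0 := by
  rw [lintegral_rayMeasure (by fun_prop), lintegral_rayMeasure hf]
  simp only [zero_mul, Real.exp_zero, ENNReal.ofReal_one, one_mul]
  rw [← lintegral_add_right_eq_self (fun u => f (Real.exp u)) (Real.log c)]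
  simp only [Real.exp_add, Real.exp_log hc]

/-- The superlevel set at height `t` of the power function `r ^ p` on the half-line `r > 0`. -/
def rpowSuperlevel (p t : ℝ) : Set ℝ :=
  {r | 0 < r ∧ t < r ^ p}

theorem ordConnected_rpowSuperlevel (p t : ℝ) : (rpowSuperlevel p t).OrdConnected := by
  refine ordConnected_iff.2 fun x hx y hy _ z hz => ?_
  have hz0 : 0 < z := hx.1.trans_le hz.1
  refine ⟨hz0, ?_⟩
  rcases le_total 0 p with hp | hp
  · exact hx.2.trans_le (Real.rpow_le_rpow hx.1.le hz.1 hp)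
  · exact hy.2.trans_le (Real.rpow_le_rpow_of_nonpos hz0 hz.2 hp)

theorem rayMeasure_eq_lintegral_volume {X : Set ℝ} (hX : MeasurableSet X) :
    rayMeasure α X = ∫⁻ t in Ioi 0, volume (X ∩ rpowSuperlevel (α - 1) t) := by
  rw [rayMeasure_apply hX, lintegral_eq_lintegral_meas_lt]
  · refine lintegral_congr fun t => ?_
    rw [Measure.restrict_apply' (hX.inter measurableSet_Ioi)]
    congr 1
    ext r
    simp only [mem_inter_iff, mem_ofPred_eq, mem_Ioi, rpowSuperlevel]
    tauto
  · filter_upwards [ae_restrict_mem (hX.inter measurableSet_Ioi)] with r hr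
    exact Real.rpow_nonneg (le_of_lt hr.2) _
  · fun_prop

theorem rayMeasure_eq_top_of_not_integrableOn {S : Set ℝ} (hS : MeasurableSet S) (hS0 : S ⊆ Ioi 0)
    (h : ¬ IntegrableOn (fun r : ℝ => r ^ (α - 1)) S) : rayMeasure α S = ⊤ := by
  contrapose! h
  rw [rayMeasure_apply hS, inter_eq_left.2 hS0] at h
  refine ⟨by fun_prop, ?_⟩
  rw [hasFiniteIntegral_iff_ofReal]
  · exact h.lt_top
  · filter_upwards [ae_restrict_mem hS] with r hr
    exact Real.rpow_nonneg (le_of_lt (hS0 hr)) _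

theorem rayMeasure_rpowSuperlevel_eq_top (hα : α ≤ 0 ∨ 1 ≤ α) {t : ℝ}
    (hne : (rpowSuperlevel (α - 1) t).Nonempty) :
    rayMeasure α (rpowSuperlevel (α - 1) t) = ⊤ := by
  obtain ⟨r₀, hr₀, htr₀⟩ := hne
  rw [eq_top_iff]
  rcases hα with hα | hα
  · rw [← rayMeasure_eq_top_of_not_integrableOn measurableSet_Ioo Ioo_subset_Ioi_self
      (mt (intervalIntegral.integrableOn_Ioo_rpow_iff hr₀).1 (by linarith : ¬ -1 < α - 1))]
    exact measure_mono fun r hr => ⟨hr.1, htr₀.trans_le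
      (Real.rpow_le_rpow_of_nonpos hr.1 hr.2.le (by linarith))⟩
  · rw [← rayMeasure_eq_top_of_not_integrableOn measurableSet_Ioi (Ioi_subset_Ioi hr₀.le)
      (mt (integrableOn_Ioi_rpow_iff hr₀).1 (by linarith : ¬ α - 1 < -1))]
    exact measure_mono fun r hr => ⟨hr₀.trans hr, htr₀.trans_le
      (Real.rpow_le_rpow hr₀.le (le_of_lt hr) (by linarith))⟩

theorem inter_rpowSuperlevel_nonempty (hα : α ≤ 0 ∨ 1 ≤ α) {X : Set ℝ}
    (hX : rayMeasure α Xᶜ ≠ ⊤) {t : ℝ} (hne : (rpowSuperlevel (α - 1) t).Nonempty) :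
    (X ∩ rpowSuperlevel (α - 1) t).Nonempty := by
  by_contra hempty
  refine hX (eq_top_iff.2 ?_)
  rw [← rayMeasure_rpowSuperlevel_eq_top hα hne]
  exact measure_mono fun r hr hrX => hempty ⟨r, hrX, hr⟩

theorem rayMeasure_le_of_combo_subset_compl (hα : α ≤ 0 ∨ 1 ≤ α) {lam : ℝ}
    (hlam : lam ∈ Ioo (0 : ℝ) 1) {A B F : Set ℝ} (hA : MeasurableSet A) (hB : MeasurableSet B)
    (hF : MeasurableSet F) (hAB : lam • A + (1 - lam) • B ⊆ Fᶜ) :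
    rayMeasure α F ≤
      ENNReal.ofReal lam * rayMeasure α Aᶜ + ENNReal.ofReal (1 - lam) * rayMeasure α Bᶜ := by
  by_cases hAtop : rayMeasure α Aᶜ = ⊤
  · simp [hAtop, ENNReal.mul_top, hlam.1]
  by_cases hBtop : rayMeasure α Bᶜ = ⊤
  · simp [hBtop, ENNReal.mul_top, hlam.2]
  have hanti : Antitone fun t : ℝ => volume (Aᶜ ∩ rpowSuperlevel (α - 1) t) :=
    fun t u htu => measure_mono fun r hr => ⟨hr.1, hr.2.1, htu.trans_lt hr.2.2⟩
  rw [rayMeasure_eq_lintegral_volume hF, rayMeasure_eq_lintegral_volume hA.compl,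
    rayMeasure_eq_lintegral_volume hB.compl, ← lintegral_const_mul' _ _ ENNReal.ofReal_ne_top,
    ← lintegral_const_mul' _ _ ENNReal.ofReal_ne_top,
    ← lintegral_add_left (hanti.measurable.const_mul _)]
  refine lintegral_mono fun t => ?_
  rcases eq_empty_or_nonempty (rpowSuperlevel (α - 1) t) with hJ | hJ
  · simp [hJ]
  · exact volume_inter_le hlam hA hB hF (ordConnected_rpowSuperlevel _ t)
      (inter_rpowSuperlevel_nonempty hα hAtop hJ) (inter_rpowSuperlevel_nonempty hα hBtop hJ) hAB

end RayMeasure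

section MinkowskiCombination

variable {K V : Type*} [Field K] [AddCommGroup V] [Module K V] {lam : K} {A B F : Set V}

theorem smul_set_compl₀ {c : K} (hc : c ≠ 0) : c • Aᶜ = (c • A)ᶜ := by
  rw [compl_eq_univ_sdiff, smul_set_sdiff₀ hc, smul_set_univ₀ hc, ← compl_eq_univ_sdiff]

theorem subset_compl_union_compl (hAB : lam • A + (1 - lam) • B ⊆ Fᶜ) : F ⊆ Aᶜ ∪ Bᶜ := by
  rw [← compl_inter, subset_compl_comm]
  rintro x ⟨hxA, hxB⟩
  have hmem := hAB (add_mem_add (smul_mem_smul_set hxA) (smul_mem_smul_set hxB))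
  rwa [← add_smul, add_sub_cancel, one_smul] at hmem

theorem preimage_smul_combo_subset_compl (hAB : lam • A + (1 - lam) • B ⊆ Fᶜ) (x : V) :
    lam • ((· • x) ⁻¹' A : Set K) + (1 - lam) • ((· • x) ⁻¹' B : Set K) ⊆
      ((· • x) ⁻¹' F : Set K)ᶜ := by
  rintro _ ⟨_, ⟨r, hr, rfl⟩, _, ⟨s, hs, rfl⟩, rfl⟩
  have hmem := hAB (add_mem_add (smul_mem_smul_set hr) (smul_mem_smul_set hs))
  simpa only [smul_smul, ← add_smul, smul_eq_mul, mem_compl_iff, mem_preimage] using hmem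

theorem rescaled_combo_subset_compl (hAB : lam • A + (1 - lam) • B ⊆ Fᶜ) {a b : K} (ha : a ≠ 0)
    (hb : b ≠ 0) (hm : lam * a + (1 - lam) * b ≠ 0) :
    (lam * a / (lam * a + (1 - lam) * b)) • a⁻¹ • A +
        ((1 - lam) * b / (lam * a + (1 - lam) * b)) • b⁻¹ • B ⊆
      ((lam * a + (1 - lam) * b)⁻¹ • F)ᶜ := by
  set m := lam * a + (1 - lam) * b
  have hlamA : lam * a / m * a⁻¹ = m⁻¹ * lam := by field_simp
  have hlamB : (1 - lam) * b / m * b⁻¹ = m⁻¹ * (1 - lam) := by field_simp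
  rw [smul_smul, smul_smul, hlamA, hlamB, mul_smul, mul_smul, ← smul_add,
    ← smul_set_compl₀ (inv_ne_zero hm)]
  exact smul_set_mono hAB

end MinkowskiCombination

section RadialWeight

variable {V : Type*} [NormedAddCommGroup V] {E X : Set V}

/-- The Gaussian in the logarithm of the norm, cut off to `E`. It is integrable with respect to
`dr / r` along every ray. -/
noncomputable def logGaussian (E : Set V) : V → ℝ≥0∞ :=
  E.indicator fun y => ENNReal.ofReal (Real.exp (-1 * Real.log ‖y‖ ^ 2))

theorem measurable_logGaussian [MeasurableSpace V] [OpensMeasurableSpace V]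
    (hE : MeasurableSet E) : Measurable (logGaussian E) :=
  Measurable.indicator (by fun_prop) hE

variable [NormedSpace ℝ V]

/-- A weight supported on `E` with integral `1` with respect to `dr / r` along every ray which meets
`E` in positive measure; it plays the role of the indicator of the unit sphere in polar
coordinates. On rays meeting `E` in a null set the denominator is `0` and the integral is `0`. -/
noncomputable def radialWeight (E : Set V) (y : V) : ℝ≥0∞ :=
  logGaussian E y / ∫⁻ r, logGaussian E (r • y) ∂rayMeasure 0

theorem radialWeight_of_notMem {y : V} (hy : y ∉ E) : radialWeight E y = 0 := by
  simp [radialWeight, logGaussian, hy]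

variable [MeasurableSpace V] [BorelSpace V] {α : ℝ}

theorem measurable_smul_pair : Measurable fun z : V × ℝ => z.2 • z.1 :=
  (continuous_snd.smul continuous_fst).measurable

theorem measurable_lintegral_smul_rayMeasure {f : V → ℝ≥0∞} (hf : Measurable f) :
    Measurable fun y => ∫⁻ r, f (r • y) ∂rayMeasure α :=
  (hf.comp measurable_smul_pair).lintegral_prod_right'

theorem measurableSet_preimage_smul (hX : MeasurableSet X) (x : V) :
    MeasurableSet ((fun r : ℝ => r • x) ⁻¹' X) :=
  (measurable_id.smul_const x) hX

theorem measurable_rayMeasure_preimage_smul (hX : MeasurableSet X) :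
    Measurable fun x => rayMeasure α ((· • x) ⁻¹' X) :=
  measurable_measure_prodMk_left (measurable_smul_pair hX)

theorem measurable_radialWeight (hE : MeasurableSet E) : Measurable (radialWeight E) :=
  (measurable_logGaussian hE).div
    (measurable_lintegral_smul_rayMeasure (measurable_logGaussian hE))

theorem lintegral_radialWeight (hE : MeasurableSet E) (y : V) :
    ∫⁻ r, radialWeight E (r • y) ∂rayMeasure 0 =
      (∫⁻ r, logGaussian E (r • y) ∂rayMeasure 0) /
        ∫⁻ r, logGaussian E (r • y) ∂rayMeasure 0 := by
  have hg := measurable_logGaussian hE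
  have hgy : Measurable fun r : ℝ => logGaussian E (r • y) := by fun_prop
  simp only [div_eq_mul_inv]
  rw [← lintegral_mul_const _ hgy]
  refine lintegral_congr_ae ?_
  filter_upwards [ae_rayMeasure_pos] with r hr
  simp only [radialWeight, div_eq_mul_inv, smul_smul]
  rw [lintegral_mul_right_rayMeasure_zero hgy hr]

theorem lintegral_radialWeight_le_one (hE : MeasurableSet E) (y : V) :
    ∫⁻ r, radialWeight E (r • y) ∂rayMeasure 0 ≤ 1 :=
  (lintegral_radialWeight hE y).trans_le ENNReal.div_self_le_one

theorem lintegral_logGaussian_ne_top (hE : MeasurableSet E) {y : V} (hy : y ≠ 0) :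
    ∫⁻ r, logGaussian E (r • y) ∂rayMeasure 0 ≠ ⊤ := by
  have hg := measurable_logGaussian hE
  refine ne_of_lt ?_
  calc ∫⁻ r, logGaussian E (r • y) ∂rayMeasure 0
      = ∫⁻ u, logGaussian E (Real.exp u • y) := by
        rw [lintegral_rayMeasure (by fun_prop)]
        simp only [zero_mul, Real.exp_zero, ENNReal.ofReal_one, one_mul]
    _ ≤ ∫⁻ u : ℝ, ENNReal.ofReal (Real.exp (-1 * (u + Real.log ‖y‖) ^ 2)) := by
        refine lintegral_mono fun u => (indicator_le_self _ _ _).trans (le_of_eq ?_)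
        simp only [norm_smul, Real.norm_eq_abs, Real.abs_exp]
        rw [Real.log_mul (Real.exp_ne_zero u) (norm_ne_zero_iff.2 hy), Real.log_exp]
    _ = ∫⁻ u : ℝ, ENNReal.ofReal (Real.exp (-1 * u ^ 2)) :=
        lintegral_add_right_eq_self
          (fun u : ℝ => ENNReal.ofReal (Real.exp (-1 * u ^ 2))) (Real.log ‖y‖)
    _ < ⊤ := (integrable_exp_neg_mul_sq one_pos).lintegral_lt_top

theorem lintegral_radialWeight_eq_one (hE : MeasurableSet E) {y : V} (hy : y ≠ 0)
    (hyE : rayMeasure 0 ((· • y) ⁻¹' E) ≠ 0) :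
    ∫⁻ r, radialWeight E (r • y) ∂rayMeasure 0 = 1 := by
  have hg := measurable_logGaussian hE
  rw [lintegral_radialWeight hE]
  refine ENNReal.div_self (fun hzero => hyE ?_) (lintegral_logGaussian_ne_top hE hy)
  rw [lintegral_eq_zero_iff (by fun_prop)] at hzero
  rw [measure_eq_zero_iff_ae_notMem]
  filter_upwards [hzero] with r hr hrE
  have hpos : logGaussian E (r • y) ≠ 0 := by
    simpa [logGaussian, indicator_of_mem (mem_preimage.1 hrE)] using Real.exp_pos _
  exact hpos hr

end RadialWeight

theorem lintegral_lintegral_swap_of_support_subset {X Y : Type*}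
    [MeasurableSpace X] [MeasurableSpace Y] {μ : Measure X} {ν : Measure Y} [SFinite ν]
    {E : Set X} [SFinite (μ.restrict E)] {k : X → Y → ℝ≥0∞}
    (hk : Measurable (Function.uncurry k)) (hkE : ∀ x ∉ E, ∀ u, k x u = 0) :
    ∫⁻ x, (∫⁻ u, k x u ∂ν) ∂μ = ∫⁻ u, (∫⁻ x, k x u ∂μ) ∂ν := by
  have hrestrict : ∀ {g : X → ℝ≥0∞}, (∀ x ∉ E, g x = 0) → ∫⁻ x in E, g x ∂μ = ∫⁻ x, g x ∂μ :=
    fun hg => setLIntegral_eq_of_support_subset (Function.support_subset_iff'.2 hg)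
  rw [← hrestrict fun x hx => by simp [hkE x hx], lintegral_lintegral_swap hk.aemeasurable]
  exact lintegral_congr fun u => hrestrict fun x hx => hkE x hx u

section Homogeneous

variable {V : Type*} [NormedAddCommGroup V] [NormedSpace ℝ V] [MeasurableSpace V]

/-- A measure is homogeneous of degree `α` if dilating a measurable set by `c > 0` multiplies its
measure by `c ^ α`. The `q`-homogeneous measures are those of degree `1 / q`. -/
def IsHomogeneousOfDegree (μ : Measure V) (α : ℝ) : Prop :=
  ∀ A : Set V, MeasurableSet A → ∀ c : ℝ, 0 < c → μ (c • A) = ENNReal.ofReal (c ^ α) * μ A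

/-- A measure is `q`-complemented concave if the inner measure of the complement of a Minkowski
combination is at most the `q`-mean of the measures of the complements. -/
def IsComplementedConcave (μ : Measure V) (q : ℝ) : Prop :=
  ∀ lam ∈ Ioo (0 : ℝ) 1, ∀ A B : Set V, MeasurableSet A → MeasurableSet B → μ Aᶜ < ⊤ → μ Bᶜ < ⊤ →
    innerMeasure μ ((lam • A + (1 - lam) • B)ᶜ) ≤ powerMean q lam (μ Aᶜ) (μ Bᶜ)

variable {μ : Measure V} {α : ℝ}

theorem IsHomogeneousOfDegree.measure_compl_smul (hμ : IsHomogeneousOfDegree μ α) {A : Set V}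
    (hA : MeasurableSet A) {c : ℝ} (hc : 0 < c) :
    μ (c • A)ᶜ = ENNReal.ofReal (c ^ α) * μ Aᶜ := by
  rw [← smul_set_compl₀ hc.ne', hμ _ hA.compl c hc]

theorem IsHomogeneousOfDegree.measure_compl_inv_rpow_smul_le_one {q : ℝ}
    (hμ : IsHomogeneousOfDegree μ (1 / q)) (hq0 : q ≠ 0) {A : Set V} (hA : MeasurableSet A) {a : ℝ}
    (ha : 0 < a) (hAa : μ Aᶜ ≤ ENNReal.ofReal a) : μ ((a ^ q)⁻¹ • A)ᶜ ≤ 1 := by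
  rw [hμ.measure_compl_smul hA (inv_pos.2 (Real.rpow_pos_of_pos ha q))]
  calc ENNReal.ofReal ((a ^ q)⁻¹ ^ (1 / q)) * μ Aᶜ
      ≤ ENNReal.ofReal ((a ^ q)⁻¹ ^ (1 / q)) * ENNReal.ofReal a := by gcongr
    _ = 1 := by
      rw [← ENNReal.ofReal_mul (by positivity), Real.inv_rpow (by positivity),
        ← Real.rpow_mul ha.le, mul_one_div_cancel hq0, Real.rpow_one, inv_mul_cancel₀ ha.ne',
        ENNReal.ofReal_one]

variable [BorelSpace V]

theorem IsHomogeneousOfDegree.measure_singleton_zero (hμ : IsHomogeneousOfDegree μ α)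
    (hα : α ≠ 0) (hfin : μ {0} ≠ ⊤) : μ {0} = 0 := by
  have hscale := hμ {0} (measurableSet_singleton 0) 2 two_pos
  rw [smul_set_singleton, smul_zero] at hscale
  by_contra hpos
  have hone : (2 : ℝ) ^ α = 1 := by
    simpa using (ENNReal.mul_eq_right hpos hfin).1 hscale.symm
  exact hα ((Real.rpow_right_inj two_pos (by norm_num)).1 (hone.trans (Real.rpow_zero 2).symm))

theorem IsHomogeneousOfDegree.lintegral_smul (hμ : IsHomogeneousOfDegree μ α) {f : V → ℝ≥0∞}
    (hf : Measurable f) {c : ℝ} (hc : 0 < c) :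
    ENNReal.ofReal (c ^ α) * ∫⁻ x, f (c • x) ∂μ = ∫⁻ x, f x ∂μ := by
  have hmap : ENNReal.ofReal (c ^ α) • μ.map (c • ·) = μ := by
    ext S hS
    rw [Measure.smul_apply, Measure.map_apply (measurable_const_smul c) hS, smul_eq_mul,
      ← hμ _ (measurable_const_smul c hS) c hc, preimage_smul₀ hc.ne', smul_inv_smul₀ hc.ne']
  conv_rhs => rw [← hmap]
  rw [lintegral_smul_measure, smul_eq_mul, lintegral_map hf (measurable_const_smul c)]

theorem IsHomogeneousOfDegree.lintegral_mul_lintegral_rayMeasure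
    (hμ : IsHomogeneousOfDegree μ α) {E : Set V} [SFinite (μ.restrict E)] {f h : V → ℝ≥0∞}
    (hf : Measurable f) (hh : Measurable h) (hfE : ∀ x ∉ E, f x = 0) (hhE : ∀ x ∉ E, h x = 0) :
    ∫⁻ x, h x * ∫⁻ r, f (r • x) ∂rayMeasure α ∂μ =
      ∫⁻ y, f y * ∫⁻ r, h (r • y) ∂rayMeasure 0 ∂μ := by
  have hexp : Measurable fun z : V × ℝ => Real.exp z.2 • z.1 :=
    measurable_smul_pair.comp (measurable_fst.prodMk (Real.measurable_exp.comp measurable_snd))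
  have hexp_neg : Measurable fun z : V × ℝ => Real.exp (-z.2) • z.1 :=
    hexp.comp (measurable_fst.prodMk measurable_snd.neg)
  calc ∫⁻ x, h x * ∫⁻ r, f (r • x) ∂rayMeasure α ∂μ
      = ∫⁻ x, (∫⁻ u : ℝ, h x * (ENNReal.ofReal (Real.exp (α * u)) * f (Real.exp u • x))) ∂μ := by
        refine lintegral_congr fun x => ?_
        rw [lintegral_rayMeasure (by fun_prop), lintegral_const_mul _ (by fun_prop)]
    _ = ∫⁻ u : ℝ, ∫⁻ x, h x * (ENNReal.ofReal (Real.exp (α * u)) * f (Real.exp u • x)) ∂μ :=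
        lintegral_lintegral_swap_of_support_subset (E := E)
          ((hh.comp measurable_fst).mul (by fun_prop)) fun x hx u => by simp [hhE x hx]
    _ = ∫⁻ u : ℝ, ∫⁻ y, f y * h (Real.exp (-u) • y) ∂μ := by
        refine lintegral_congr fun u => ?_
        rw [← hμ.lintegral_smul (f := fun y => f y * h (Real.exp (-u) • y)) (by fun_prop)
            (Real.exp_pos u),
          ← lintegral_const_mul' _ _ ENNReal.ofReal_ne_top, ← Real.exp_mul, mul_comm u α]
        refine lintegral_congr fun x => ?_
        rw [smul_smul, ← Real.exp_add, neg_add_cancel, Real.exp_zero, one_smul]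
        ring
    _ = ∫⁻ y, (∫⁻ u : ℝ, f y * h (Real.exp (-u) • y)) ∂μ :=
        (lintegral_lintegral_swap_of_support_subset (E := E)
          ((hf.comp measurable_fst).mul (hh.comp hexp_neg)) fun y hy u => by simp [hfE y hy]).symm
    _ = ∫⁻ y, f y * ∫⁻ r, h (r • y) ∂rayMeasure 0 ∂μ := by
        refine lintegral_congr fun y => ?_
        rw [lintegral_neg_eq_self fun u => f y * h (Real.exp u • y),
          lintegral_const_mul _ (by fun_prop), lintegral_rayMeasure (by fun_prop)]
        simp only [zero_mul, Real.exp_zero, ENNReal.ofReal_one, one_mul]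

section Complemented

variable {lam : ℝ} {A B E F X : Set V}

theorem IsHomogeneousOfDegree.lintegral_radialWeight_mul_rayMeasure
    (hμ : IsHomogeneousOfDegree μ α) (hE : MeasurableSet E) (hEtop : μ E ≠ ⊤)
    (hX : MeasurableSet X) (hXE : X ⊆ E) :
    ∫⁻ x, radialWeight E x * rayMeasure α ((· • x) ⁻¹' X) ∂μ =
      ∫⁻ y in X, ∫⁻ r, radialWeight E (r • y) ∂rayMeasure 0 ∂μ := by
  have : IsFiniteMeasure (μ.restrict E) := isFiniteMeasure_restrict.2 hEtop
  have hpolar := hμ.lintegral_mul_lintegral_rayMeasure (measurable_one.indicator hX)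
    (measurable_radialWeight hE) (fun x hx => indicator_of_notMem (fun h => hx (hXE h)) _)
    fun x => radialWeight_of_notMem
  rw [← lintegral_indicator hX]
  convert hpolar using 4 with x y
  · exact (lintegral_indicator_one (measurableSet_preimage_smul hX x)).symm
  · by_cases hy : y ∈ X <;> simp [hy]

theorem rayMeasure_preimage_smul_compl_union_compl_ne_zero (hlam : lam ∈ Ioo (0 : ℝ) 1)
    (hA : MeasurableSet A) (hB : MeasurableSet B) (hAB : lam • A + (1 - lam) • B ⊆ Fᶜ)
    {x : V} (hx : x ∈ F) :
    rayMeasure α ((· • x) ⁻¹' (Aᶜ ∪ Bᶜ)) ≠ 0 := by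
  rw [Ne, rayMeasure_eq_zero_iff (measurableSet_preimage_smul (hA.compl.union hB.compl) x)]
  refine volume_compl_union_compl_inter_Ioi_ne_zero hlam fun hone => ?_
  exact preimage_smul_combo_subset_compl hAB x hone (by simpa using hx)

theorem IsHomogeneousOfDegree.lintegral_radialWeight_mul_rayMeasure_le
    (hμ : IsHomogeneousOfDegree μ α) (hE : MeasurableSet E) (hEtop : μ E ≠ ⊤)
    (hX : MeasurableSet X) (hXE : X ⊆ E) :
    ∫⁻ x, radialWeight E x * rayMeasure α ((· • x) ⁻¹' X) ∂μ ≤ μ X := by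
  rw [hμ.lintegral_radialWeight_mul_rayMeasure hE hEtop hX hXE, ← setLIntegral_one]
  exact lintegral_mono fun y => lintegral_radialWeight_le_one hE y

theorem IsHomogeneousOfDegree.lintegral_radialWeight_mul_rayMeasure_eq
    (hμ : IsHomogeneousOfDegree μ α) (hα : α ≠ 0) (hE : MeasurableSet E) (hEtop : μ E ≠ ⊤)
    (hX : MeasurableSet X) (hXE : X ⊆ E)
    (hray : ∀ x ∈ X, rayMeasure 0 ((· • x) ⁻¹' E) ≠ 0) :
    ∫⁻ x, radialWeight E x * rayMeasure α ((· • x) ⁻¹' X) ∂μ = μ X := by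
  have hzero : μ (X ∩ {0}) = 0 := by
    by_cases h0 : (0 : V) ∈ X
    · exact measure_mono_null inter_subset_right (hμ.measure_singleton_zero hα
        (measure_ne_top_of_subset (singleton_subset_iff.2 (hXE h0)) hEtop))
    · rw [inter_singleton_eq_empty.2 h0, measure_empty]
  rw [hμ.lintegral_radialWeight_mul_rayMeasure hE hEtop hX hXE, ← setLIntegral_one]
  refine setLIntegral_congr_fun_ae hX ?_
  filter_upwards [measure_eq_zero_iff_ae_notMem.1 hzero] with y hy hyX
  exact lintegral_radialWeight_eq_one hE (fun h0 => hy ⟨hyX, h0⟩) (hray y hyX)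

theorem IsHomogeneousOfDegree.measure_le_of_combo_subset_compl (hμ : IsHomogeneousOfDegree μ α)
    (hα : α < 0 ∨ 1 ≤ α) (hlam : lam ∈ Ioo (0 : ℝ) 1) (hA : MeasurableSet A)
    (hB : MeasurableSet B) (hF : MeasurableSet F) (hAtop : μ Aᶜ ≠ ⊤) (hBtop : μ Bᶜ ≠ ⊤)
    (hAB : lam • A + (1 - lam) • B ⊆ Fᶜ) :
    μ F ≤ ENNReal.ofReal lam * μ Aᶜ + ENNReal.ofReal (1 - lam) * μ Bᶜ := by
  set E := Aᶜ ∪ Bᶜ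
  have hE : MeasurableSet E := hA.compl.union hB.compl
  have hEtop : μ E ≠ ⊤ := measure_union_ne_top hAtop hBtop
  have hα0 : α ≠ 0 := by rcases hα with h | h <;> linarith
  have hmeas : Measurable fun x => radialWeight E x * rayMeasure α ((· • x) ⁻¹' Aᶜ) :=
    (measurable_radialWeight hE).mul (measurable_rayMeasure_preimage_smul hA.compl)
  calc μ F = ∫⁻ x, radialWeight E x * rayMeasure α ((· • x) ⁻¹' F) ∂μ :=
        (hμ.lintegral_radialWeight_mul_rayMeasure_eq hα0 hE hEtop hF
          (subset_compl_union_compl hAB)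
          fun _ => rayMeasure_preimage_smul_compl_union_compl_ne_zero hlam hA hB hAB).symm
    _ ≤ ∫⁻ x, (ENNReal.ofReal lam * (radialWeight E x * rayMeasure α ((· • x) ⁻¹' Aᶜ)) +
          ENNReal.ofReal (1 - lam) * (radialWeight E x * rayMeasure α ((· • x) ⁻¹' Bᶜ))) ∂μ := by
        refine lintegral_mono fun x => ?_
        rw [mul_left_comm, mul_left_comm (ENNReal.ofReal (1 - lam)), ← mul_add]
        gcongr
        exact rayMeasure_le_of_combo_subset_compl (hα.imp_left le_of_lt) hlam
          (measurableSet_preimage_smul hA x) (measurableSet_preimage_smul hB x)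
          (measurableSet_preimage_smul hF x) (preimage_smul_combo_subset_compl hAB x)
    _ = ENNReal.ofReal lam * ∫⁻ x, radialWeight E x * rayMeasure α ((· • x) ⁻¹' Aᶜ) ∂μ +
        ENNReal.ofReal (1 - lam) * ∫⁻ x, radialWeight E x * rayMeasure α ((· • x) ⁻¹' Bᶜ) ∂μ := by
        rw [lintegral_add_left (hmeas.const_mul _), lintegral_const_mul' _ _ ENNReal.ofReal_ne_top,
          lintegral_const_mul' _ _ ENNReal.ofReal_ne_top]
    _ ≤ ENNReal.ofReal lam * μ Aᶜ + ENNReal.ofReal (1 - lam) * μ Bᶜ := by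
        gcongr
        · exact hμ.lintegral_radialWeight_mul_rayMeasure_le hE hEtop hA.compl subset_union_left
        · exact hμ.lintegral_radialWeight_mul_rayMeasure_le hE hEtop hB.compl subset_union_right

variable {q : ℝ}

theorem IsHomogeneousOfDegree.measure_le_ofReal_of_combo_subset_compl
    (hμ : IsHomogeneousOfDegree μ (1 / q)) (hq0 : q ≠ 0) (hq : q ≤ 1)
    (hlam : lam ∈ Ioo (0 : ℝ) 1) (hA : MeasurableSet A) (hB : MeasurableSet B)
    (hF : MeasurableSet F) (hAB : lam • A + (1 - lam) • B ⊆ Fᶜ) {a b : ℝ}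
    (ha : 0 < a) (hb : 0 < b) (hAa : μ Aᶜ ≤ ENNReal.ofReal a) (hBb : μ Bᶜ ≤ ENNReal.ofReal b) :
    μ F ≤ ENNReal.ofReal ((lam * a ^ q + (1 - lam) * b ^ q) ^ (1 / q)) := by
  have hl := hlam.1
  have hl' := sub_pos.2 hlam.2
  have haq := Real.rpow_pos_of_pos ha q
  have hbq := Real.rpow_pos_of_pos hb q
  set m := lam * a ^ q + (1 - lam) * b ^ q with hm
  have hm0 : 0 < m := by positivity
  set lam' := lam * a ^ q / m with hlam'_def
  have hcompl : 1 - lam' = (1 - lam) * b ^ q / m := by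
    rw [hlam'_def, one_sub_div hm0.ne', hm]
    ring
  have hlam' : lam' ∈ Ioo (0 : ℝ) 1 :=
    ⟨by positivity, sub_pos.1 (hcompl ▸ by positivity)⟩
  have hcombo : lam' • (a ^ q)⁻¹ • A + (1 - lam') • (b ^ q)⁻¹ • B ⊆ (m⁻¹ • F)ᶜ :=
    hcompl ▸ rescaled_combo_subset_compl hAB haq.ne' hbq.ne' hm0.ne'
  have hA1 := hμ.measure_compl_inv_rpow_smul_le_one hq0 hA ha hAa
  have hB1 := hμ.measure_compl_inv_rpow_smul_le_one hq0 hB hb hBb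
  have hunit : μ (m⁻¹ • F) ≤ 1 :=
    calc μ (m⁻¹ • F) ≤ ENNReal.ofReal lam' * μ ((a ^ q)⁻¹ • A)ᶜ +
          ENNReal.ofReal (1 - lam') * μ ((b ^ q)⁻¹ • B)ᶜ :=
          hμ.measure_le_of_combo_subset_compl
            (hq0.lt_or_gt.imp one_div_neg.2 fun h => (one_le_div h).2 hq) hlam'
            (hA.const_smul₀ _) (hB.const_smul₀ _) (hF.const_smul₀ _)
            (hA1.trans_lt ENNReal.one_lt_top).ne (hB1.trans_lt ENNReal.one_lt_top).ne hcombo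
      _ ≤ ENNReal.ofReal lam' * 1 + ENNReal.ofReal (1 - lam') * 1 := by gcongr
      _ = 1 := by rw [mul_one, mul_one, ofReal_add_ofReal_one_sub hlam']
  calc μ F = ENNReal.ofReal (m ^ (1 / q)) * μ (m⁻¹ • F) := by
        rw [← hμ _ (hF.const_smul₀ _) m hm0, smul_inv_smul₀ hm0.ne']
    _ ≤ ENNReal.ofReal (m ^ (1 / q)) := mul_le_of_le_one_right' hunit

end Complemented

theorem stmt11_general {q : ℝ} (hq0 : q ≠ 0) (hq : q ≤ 1)
    (hμ : IsHomogeneousOfDegree μ (1 / q)) : IsComplementedConcave μ q := by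
  intro lam hlam A B hA hB hAtop hBtop
  refine iSup_le fun F => iSup_le fun hF => iSup_le fun hFsub => ?_
  refine le_powerMean_of_forall_lt_ofReal hAtop.ne hBtop.ne fun a b ha hb => ?_
  have ha0 : 0 < a := ENNReal.ofReal_pos.1 (ha.trans_le' zero_le)
  have hb0 : 0 < b := ENNReal.ofReal_pos.1 (hb.trans_le' zero_le)
  rw [powerMean_ofReal hlam ha0 hb0]
  exact hμ.measure_le_ofReal_of_combo_subset_compl hq0 hq hlam hA hB hF
    (subset_compl_comm.1 hFsub) ha0 hb0 ha.le hb.le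

end Homogeneous

/-- a `q`-concave and `q`-homogeneous measure on `ℝⁿ`, `q ∈ (-∞,1/n]∖{0}`,
is `q`-complemented concave. -/
theorem stmt11 (n : ℕ) (hn : 1 ≤ n) (q : ℝ) (hq0 : q ≠ 0) (hq : q ≤ 1 / (n : ℝ))
    (μ : Measure (Fin n → ℝ))
    (hconc : ∀ A B : Set (Fin n → ℝ), MeasurableSet A → MeasurableSet B → 0 < μ A * μ B →
      ∀ lam ∈ Set.Ioo (0 : ℝ) 1,
        (ENNReal.ofReal lam * μ A ^ q + ENNReal.ofReal (1 - lam) * μ B ^ q) ^ (1 / q) ≤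
          innerMeasure μ (lam • A + (1 - lam) • B))
    (hhom : ∀ A : Set (Fin n → ℝ), MeasurableSet A → ∀ c : ℝ, 0 < c →
      μ (c • A) = ENNReal.ofReal (c ^ (1 / q)) * μ A) :
    ∀ lam ∈ Set.Ioo (0 : ℝ) 1, ∀ A B : Set (Fin n → ℝ),
      MeasurableSet A → MeasurableSet B → μ Aᶜ < ⊤ → μ Bᶜ < ⊤ →
      innerMeasure μ ((lam • A + (1 - lam) • B)ᶜ) ≤
        (ENNReal.ofReal lam * μ Aᶜ ^ q + ENNReal.ofReal (1 - lam) * μ Bᶜ ^ q) ^ (1 / q) :=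
  stmt11_general hq0
    (hq.trans (div_le_one_of_le₀ (by exact_mod_cast hn) n.cast_nonneg)) hhom
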